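/- Work in ℝ⁵ with the D₅ data below, and let ρ = ω₁+ω₂+ω₃+ω₄+ω₅ = (4,3,2,1,0). For all nonnegative integers a, b and every integer c ≥ 1: the reflection of the vector aω₁ + bω₂ + cω₃ − 2ω₄ + ρ in the root α₄ = e₄ − e₅ equals aω₁ + bω₂ + (c−1)ω₃ + ρ, and moreover ⟨aω₁ + bω₂ + (c−1)ω₃ + ρ, α⟩ > 0 for every positive root α of D₅. (By the Borel–Bott–Weil theorem, this computes the cohomology of the bundle of weight aω₁+bω₂+cω₃−2ω₄ on the spinor tenfold: it is the irreducible representation of highest weight aω₁+bω₂+(c−1)ω₃, concentrated in degree 1.) -/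

import Mathlib

noncomputable section

open Finset

/-- The standard dot product on `ℝ⁵`. -/
def dot5 (v w : Fin 5 → ℝ) : ℝ := ∑ i, v i * w i

/-- The standard orthonormal basis vectors `e₁,…,e₅` of `ℝ⁵` (zero-indexed). -/
def e5 (i : Fin 5) : Fin 5 → ℝ := Pi.single i 1

/-- The fundamental weights of `D₅`. -/
def ωD (k : Fin 5) : Fin 5 → ℝ :=
  match k with
  | 0 => e5 0
  | 1 => e5 0 + e5 1
  | 2 => e5 0 + e5 1 + e5 2
  | 3 => (1/2 : ℝ) • (e5 0 + e5 1 + e5 2 + e5 3 - e5 4)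
  | 4 => (1/2 : ℝ) • (e5 0 + e5 1 + e5 2 + e5 3 + e5 4)

/-- Reflection in the (nonzero) vector `α`. -/
def refl5 (α v : Fin 5 → ℝ) : Fin 5 → ℝ := v - (2 * dot5 v α / dot5 α α) • α

/-- The positive roots of `D₅`: `eᵢ − eⱼ` and `eᵢ + eⱼ` for `i < j`. -/
def posRootsD5 : Set (Fin 5 → ℝ) :=
  {α | ∃ i j : Fin 5, i < j ∧ (α = e5 i - e5 j ∨ α = e5 i + e5 j)}

/-- The half sum of positive roots / sum of fundamental weights of `D₅`. -/
def ρD : Fin 5 → ℝ := ωD 0 + ωD 1 + ωD 2 + ωD 3 + ωD 4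

end

/-- For nonnegative integers `a, b` and an integer `c ≥ 1`: reflecting the vector
`aω₁ + bω₂ + cω₃ − 2ω₄ + ρ` in the simple root `α₄ = e₄ − e₅` gives
`aω₁ + bω₂ + (c−1)ω₃ + ρ`, and the latter pairs strictly positively with every
positive root of `D₅`. -/
theorem d5_reflection_regular (a b : ℕ) (c : ℤ) (hc : 1 ≤ c) :
    refl5 (e5 3 - e5 4)
        ((a : ℝ) • ωD 0 + (b : ℝ) • ωD 1 + (c : ℝ) • ωD 2 - (2 : ℝ) • ωD 3 + ρD)
      = (a : ℝ) • ωD 0 + (b : ℝ) • ωD 1 + ((c : ℝ) - 1) • ωD 2 + ρD ∧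
    ∀ α ∈ posRootsD5,
      0 < dot5 ((a : ℝ) • ωD 0 + (b : ℝ) • ωD 1 + ((c : ℝ) - 1) • ωD 2 + ρD) α := by
  have ha : (0 : ℝ) ≤ a := Nat.cast_nonneg a
  have hb : (0 : ℝ) ≤ b := Nat.cast_nonneg b
  have hc' : (1 : ℝ) ≤ c := by exact_mod_cast hc
  constructor
  · funext k
    fin_cases k <;>
      simp [refl5, dot5, ρD, ωD, e5, Fin.sum_univ_five, Pi.single_apply] <;> ring
  · have key : (a : ℝ) • ωD 0 + (b : ℝ) • ωD 1 + ((c : ℝ) - 1) • ωD 2 + ρD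
        = ![(a : ℝ) + b + c + 3, (b : ℝ) + c + 2, (c : ℝ) + 1, 1, 0] := by
      funext k
      fin_cases k <;> simp [ρD, ωD, e5, Pi.single_apply] <;> ring
    rw [key]
    rintro α ⟨i, j, hij, rfl | rfl⟩ <;> fin_cases i <;> fin_cases j <;>
      first
      | exact absurd hij (by decide)
      | (simp [dot5, e5, Fin.sum_univ_five, Pi.single_apply] <;> linarith)
      | simp [dot5, e5, Fin.sum_univ_five, Pi.single_apply]
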